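/- Let d, k be natural numbers and let n₁, …, n_k ∈ ℤ^d be vectors that are linearly independent over ℚ. Let K = {(t₁, …, t_k) ∈ (ℂˣ)^k : for every j, ∏_{i=1}^{k} t_i^{(n_i)_j} = 1}, a subgroup of (ℂˣ)^k. Let L ⊆ ℤ^d be the subgroup generated by n₁, …, n_k and let L' = {v ∈ ℤ^d : m • v ∈ L for some positive integer m} be its saturation. Then K is a finite group, the index of L in L' is finite, and the cardinality of K equals that index. -/

import Mathlib

open Finset in
/-- The subgroup `K = {(t₁, …, t_k) ∈ (ℂˣ)^k : ∀ j, ∏ i, t i ^ (n i) j = 1}` attached to a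
family of integer vectors `n₁, …, n_k ∈ ℤ^d`; for a simplicial cone it is the stabilizer
group `G_σ` of the corresponding coordinate subspace. -/
def stabilizerGroup {d k : ℕ} (n : Fin k → Fin d → ℤ) : Subgroup (Fin k → ℂˣ) where
  carrier := {t | ∀ j : Fin d, ∏ i : Fin k, t i ^ n i j = 1}
  one_mem' := by intro j; simp
  mul_mem' := by
    intro a b ha hb j
    simp only [Set.mem_setOf_eq] at ha hb ⊢
    simp [mul_zpow, Finset.prod_mul_distrib, ha j, hb j]
  inv_mem' := by
    intro a ha j
    simp only [Set.mem_setOf_eq] at ha ⊢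
    simp only [Pi.inv_apply, inv_zpow]
    rw [Finset.prod_inv_distrib, ha j, inv_one]

/-- The saturation `L' = {v ∈ ℤ^d : m • v ∈ L for some positive integer m}` of a subgroup
`L ⊆ ℤ^d`. -/
def saturationOf {d : ℕ} (L : AddSubgroup (Fin d → ℤ)) : AddSubgroup (Fin d → ℤ) where
  carrier := {v | ∃ m : ℕ, 0 < m ∧ m • v ∈ L}
  zero_mem' := ⟨1, Nat.one_pos, by simpa using L.zero_mem⟩
  add_mem' := by
    rintro v w ⟨m, hm, hv⟩ ⟨l, hl, hw⟩
    refine ⟨m * l, Nat.mul_pos hm hl, ?_⟩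
    rw [smul_add]
    exact L.add_mem
      (by rw [mul_comm, mul_smul]; exact L.nsmul_mem hv l)
      (by rw [mul_smul]; exact L.nsmul_mem hw m)
  neg_mem' := by
    rintro v ⟨m, hm, hv⟩
    exact ⟨m, hm, by rw [smul_neg]; exact L.neg_mem hv⟩

lemma stab_exists_rightInv {d k : ℕ} (n : Fin k → Fin d → ℤ)
    (hind : LinearIndependent ℚ fun i : Fin k => fun j : Fin d => (n i j : ℚ)) :
    ∃ G : Fin d → Fin k → ℚ, ∀ i i', ∑ j, (n i j : ℚ) * G j i' = if i = i' then 1 else 0 := by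
  obtain ⟨g, hg⟩ := LinearMap.exists_leftInverse_of_injective
    (Fintype.linearCombination ℚ (fun i : Fin k => fun j : Fin d => (n i j : ℚ)))
    (LinearMap.ker_eq_bot.2 (linearIndependent_iff_injective_fintypeLinearCombination.1 hind))
  refine ⟨fun j => g (Pi.single j 1), fun i i' => ?_⟩
  have h1 := LinearMap.congr_fun hg (Pi.single i 1)
  simp only [LinearMap.comp_apply, Fintype.linearCombination_apply_single, one_smul,
    LinearMap.id_apply] at h1
  rw [LinearMap.pi_apply_eq_sum_univ g] at h1
  have h2 := congrFun h1 i'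
  simp only [Finset.sum_apply, Pi.smul_apply, smul_eq_mul, Pi.single_apply] at h2
  rw [if_congr (eq_comm (a := i)) rfl rfl, ← h2]
  refine Finset.sum_congr rfl fun j _ => ?_
  have h5 : (Pi.single j 1 : Fin d → ℚ) = fun x => if j = x then 1 else 0 := by
    ext x
    simp [Pi.single_apply, eq_comm]
  rw [← h5]

/-- rational coordinates -/
def stabCoord {d k : ℕ} (G : Fin d → Fin k → ℚ) : (Fin d → ℤ) →+ (Fin k → ℚ) where
  toFun v i := ∑ j, (v j : ℚ) * G j i
  map_zero' := by ext; simp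
  map_add' v w := by ext; simp [add_mul, Finset.sum_add_distrib]

lemma stabCoord_unique {d k : ℕ} (n : Fin k → Fin d → ℤ) (G : Fin d → Fin k → ℚ)
    (hG : ∀ i i', ∑ j, (n i j : ℚ) * G j i' = if i = i' then 1 else 0)
    (v : Fin d → ℤ) (a : Fin k → ℂ) (h : ∀ j, (v j : ℂ) = ∑ i, a i * n i j) (i : Fin k) :
    a i = (stabCoord G v i : ℂ) := by
  have hG' : ∀ i i', ∑ j, (n i j : ℂ) * G j i' = if i = i' then 1 else 0 := by
    intro i i'
    have := congrArg (fun q : ℚ => (q : ℂ)) (hG i i')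
    push_cast at this
    rw [this]
    split_ifs <;> simp
  simp only [stabCoord, AddMonoidHom.coe_mk, ZeroHom.coe_mk]
  push_cast
  simp_rw [h, Finset.sum_mul]
  rw [Finset.sum_comm]
  simp_rw [mul_assoc, ← Finset.mul_sum, hG']
  simp

lemma stab_mem_closure {d k : ℕ} (n : Fin k → Fin d → ℤ) (v : Fin d → ℤ) :
    v ∈ AddSubgroup.closure (Set.range n) ↔ ∃ a : Fin k → ℤ, ∀ j, v j = ∑ i, a i * n i j := by
  rw [AddSubgroup.mem_closure_range_iff_of_fintype]
  refine exists_congr fun a => ?_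
  rw [funext_iff]
  refine forall_congr' fun j => ?_
  simp [eq_comm]

lemma stab_sat {d k : ℕ} (n : Fin k → Fin d → ℤ) (G : Fin d → Fin k → ℚ)
    (hG : ∀ i i', ∑ j, (n i j : ℚ) * G j i' = if i = i' then 1 else 0)
    (v : Fin d → ℤ) (hv : v ∈ saturationOf (AddSubgroup.closure (Set.range n))) (j : Fin d) :
    (v j : ℂ) = ∑ i, (stabCoord G v i : ℂ) * n i j := by
  obtain ⟨m, hm, hv⟩ := hv
  obtain ⟨a, ha⟩ := (stab_mem_closure n _).1 hv
  have hm' : (m : ℂ) ≠ 0 := by exact_mod_cast hm.ne'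
  have key : ∀ j, (v j : ℂ) = ∑ i, ((a i : ℂ) / m) * n i j := by
    intro j
    have h := congrArg (fun z : ℤ => (z : ℂ)) (ha j)
    simp only [Pi.smul_apply, nsmul_eq_mul] at h
    push_cast at h
    simp_rw [div_mul_eq_mul_div]
    rw [← Finset.sum_div, ← h]
    field_simp
  rw [key j]
  refine Finset.sum_congr rfl fun i _ => ?_
  rw [stabCoord_unique n G hG v _ key i]

/-- exponential -/
noncomputable def stabExp (z : ℂ) : ℂˣ := Units.mk0 (Complex.exp (z * (2 * Real.pi * Complex.I)))
  (Complex.exp_ne_zero _)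

lemma stabExp_add (z w : ℂ) : stabExp (z + w) = stabExp z * stabExp w := by
  ext; simp [stabExp, add_mul, Complex.exp_add]

lemma stabExp_zero : stabExp 0 = 1 := by
  ext; simp [stabExp]

lemma stabExp_zpow (z : ℂ) (m : ℤ) : stabExp z ^ m = stabExp (z * m) := by
  ext
  simp only [stabExp, Units.val_zpow_eq_zpow_val, Units.val_mk0]
  rw [← Complex.exp_int_mul]
  congr 1; ring

lemma stabExp_sum {ι : Type*} (s : Finset ι) (f : ι → ℂ) :
    stabExp (∑ i ∈ s, f i) = ∏ i ∈ s, stabExp (f i) := by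
  classical
  induction s using Finset.induction_on with
  | empty => simp [stabExp_zero]
  | insert a s ha ih => rw [Finset.sum_insert ha, Finset.prod_insert ha, stabExp_add, ih]

lemma stabExp_eq_one (z : ℂ) : stabExp z = 1 ↔ ∃ m : ℤ, z = m := by
  rw [Units.ext_iff]
  simp only [stabExp, Units.val_mk0, Units.val_one]
  rw [Complex.exp_eq_one_iff]
  refine exists_congr fun m => ?_
  exact mul_left_inj' Complex.two_pi_I_ne_zero

lemma stabExp_surj (t : ℂˣ) : ∃ z, stabExp z = t := by
  refine ⟨Complex.log t / (2 * Real.pi * Complex.I), ?_⟩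
  ext
  simp only [stabExp, Units.val_mk0]
  rw [div_mul_cancel₀ _ Complex.two_pi_I_ne_zero, Complex.exp_log t.ne_zero]

lemma stab_prod {d k : ℕ} (n : Fin k → Fin d → ℤ) (a : Fin k → ℂ) (j : Fin d) :
    ∏ i, stabExp (a i) ^ n i j = stabExp (∑ i, a i * n i j) := by
  rw [stabExp_sum]
  exact Finset.prod_congr rfl fun i _ => stabExp_zpow _ _

/-- the homomorphism from the saturation to the stabilizer group -/
noncomputable def stabHom {d k : ℕ} (n : Fin k → Fin d → ℤ) (G : Fin d → Fin k → ℚ)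
    (hG : ∀ i i', ∑ j, (n i j : ℚ) * G j i' = if i = i' then 1 else 0) :
    saturationOf (AddSubgroup.closure (Set.range n)) →+ Additive (stabilizerGroup n) :=
  AddMonoidHom.mk' (fun v => Additive.ofMul ⟨fun i => stabExp (stabCoord G v.1 i), by
    intro j
    rw [stab_prod, ← stab_sat n G hG v.1 v.2 j, stabExp_eq_one]
    exact ⟨_, rfl⟩⟩) (by
    intro v w
    rw [← ofMul_mul]
    congr 1
    ext1
    funext i
    simp [stabExp_add])

lemma stabHom_surj {d k : ℕ} (n : Fin k → Fin d → ℤ) (G : Fin d → Fin k → ℚ)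
    (hG : ∀ i i', ∑ j, (n i j : ℚ) * G j i' = if i = i' then 1 else 0) :
    Function.Surjective (stabHom n G hG) := by
  intro t
  obtain ⟨t, ht⟩ := t
  choose a ha using fun i => stabExp_surj (t i)
  have h1 : ∀ j, ∃ m : ℤ, ∑ i, a i * n i j = m := by
    intro j
    rw [← stabExp_eq_one, ← stab_prod]
    simp_rw [ha]
    exact ht j
  choose v hv using h1
  have hc := stabCoord_unique n G hG v a (fun j => (hv j).symm)
  have hvs : v ∈ saturationOf (AddSubgroup.closure (Set.range n)) := by
    refine ⟨∏ i, (stabCoord G v i).den, Finset.prod_pos fun i _ => Rat.den_pos _, ?_⟩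
    rw [stab_mem_closure]
    have h2 : ∀ i, ∃ b : ℤ, ((∏ i, (stabCoord G v i).den : ℕ) : ℚ) * stabCoord G v i = b := by
      intro i
      obtain ⟨e, he⟩ := Finset.dvd_prod_of_mem (fun i => (stabCoord G v i).den) (Finset.mem_univ i)
      refine ⟨e * (stabCoord G v i).num, ?_⟩
      rw [he]
      push_cast
      rw [mul_comm ((stabCoord G v i).den : ℚ), mul_assoc, Rat.den_mul_eq_num]
    choose b hb using h2
    refine ⟨b, fun j => ?_⟩
    have h3 : ∀ i, ((∏ i, (stabCoord G v i).den : ℕ) : ℂ) * a i = b i := by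
      intro i
      rw [hc i]
      have := congrArg (fun q : ℚ => (q : ℂ)) (hb i)
      simpa using this
    generalize (∏ i, (stabCoord G v i).den : ℕ) = M at h3 ⊢
    have h4 : (((M • v) j : ℤ) : ℂ) = ((∑ i, b i * n i j : ℤ) : ℂ) := by
      simp only [Pi.smul_apply, nsmul_eq_mul]
      push_cast
      rw [← hv j, Finset.mul_sum]
      refine Finset.sum_congr rfl fun i _ => ?_
      rw [← h3 i, mul_assoc]
    exact_mod_cast h4
  refine ⟨⟨v, hvs⟩, ?_⟩
  apply Additive.toMul.injective
  apply Subtype.ext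
  funext i
  change stabExp (stabCoord G v i) = t i
  rw [← hc i, ha]

lemma stabHom_ker {d k : ℕ} (n : Fin k → Fin d → ℤ) (G : Fin d → Fin k → ℚ)
    (hG : ∀ i i', ∑ j, (n i j : ℚ) * G j i' = if i = i' then 1 else 0) :
    (stabHom n G hG).ker = (AddSubgroup.closure (Set.range n)).addSubgroupOf
        (saturationOf (AddSubgroup.closure (Set.range n))) := by
  ext ⟨v, hvs⟩
  rw [AddMonoidHom.mem_ker, AddSubgroup.mem_addSubgroupOf, stab_mem_closure]
  have : stabHom n G hG ⟨v, hvs⟩ = 0 ↔ ∀ i, stabExp (stabCoord G v i) = 1 := by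
    rw [← Additive.toMul.injective.eq_iff, ← Subtype.val_injective.eq_iff, funext_iff]
    rfl
  rw [this]
  simp_rw [stabExp_eq_one]
  constructor
  · intro h
    choose b hb using h
    refine ⟨b, fun j => ?_⟩
    have := stab_sat n G hG v hvs j
    simp_rw [hb] at this
    exact_mod_cast this
  · rintro ⟨b, hb⟩ i
    refine ⟨b i, (stabCoord_unique n G hG v (fun i => (b i : ℂ)) (fun j => ?_) i).symm⟩
    have := hb j
    change (v j : ℂ) = _
    rw [show v j = _ from this]
    push_cast
    rfl

lemma stab_index_ne {d : ℕ} (L : AddSubgroup (Fin d → ℤ)) :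
    (L.addSubgroupOf (saturationOf L)).index ≠ 0 := by
  have hfg : AddGroup.FG (saturationOf L) := by
    rw [← Module.Finite.iff_addGroup_fg]
    exact (inferInstance : Module.Finite ℤ (AddSubgroup.toIntSubmodule (saturationOf L)))
  have hfin : Finite (saturationOf L ⧸ L.addSubgroupOf (saturationOf L)) := by
    have : Module.Finite ℤ (saturationOf L ⧸ L.addSubgroupOf (saturationOf L)) :=
      Module.Finite.iff_addGroup_fg.2 inferInstance
    refine Module.finite_of_fg_torsion _ ?_
    · intro x
      obtain ⟨⟨v, m, hm, hv⟩, rfl⟩ := QuotientAddGroup.mk_surjective x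
      refine ⟨⟨(m : ℤ), mem_nonZeroDivisors_of_ne_zero (by exact_mod_cast hm.ne')⟩, ?_⟩
      rw [Submonoid.mk_smul]
      rw [natCast_zsmul, ← QuotientAddGroup.mk_nsmul, QuotientAddGroup.eq_zero_iff]
      exact hv
  exact AddSubgroup.finiteIndex_of_finite_quotient.index_ne_zero

/-- **Order of the stabilizer group of a simplicial cone.**
Let `n₁, …, n_k ∈ ℤ^d` be linearly independent over `ℚ`, let
`K = {t ∈ (ℂˣ)^k : ∀ j, ∏ i, t i ^ (n i) j = 1}`, let `L ⊆ ℤ^d` be the subgroup generated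
by the `nᵢ` and `L'` its saturation.  Then `K` is finite, `L` has finite index in `L'`,
and the order of `K` equals that index (the multiplicity of the cone). -/
theorem card_stabilizerGroup_eq_multiplicity
    {d k : ℕ} (n : Fin k → Fin d → ℤ)
    (hind : LinearIndependent ℚ fun i : Fin k => fun j : Fin d => (n i j : ℚ)) :
    Finite ↥(stabilizerGroup n) ∧
    ((AddSubgroup.closure (Set.range n)).addSubgroupOf
        (saturationOf (AddSubgroup.closure (Set.range n)))).index ≠ 0 ∧
    Nat.card ↥(stabilizerGroup n) =
      ((AddSubgroup.closure (Set.range n)).addSubgroupOf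
        (saturationOf (AddSubgroup.closure (Set.range n)))).index := by
  obtain ⟨G, hG⟩ := stab_exists_rightInv n hind
  have h0 := stab_index_ne (AddSubgroup.closure (Set.range n))
  have h1 : Nat.card (stabilizerGroup n) = ((AddSubgroup.closure (Set.range n)).addSubgroupOf
        (saturationOf (AddSubgroup.closure (Set.range n)))).index := by
    rw [← stabHom_ker n G hG, AddSubgroup.index_ker,
      AddMonoidHom.range_eq_top.2 (stabHom_surj n G hG), AddSubgroup.card_top]
    rfl
  exact ⟨Nat.finite_of_card_ne_zero (h1 ▸ h0), h0, h1⟩
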